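/- Let q* be the optimal action-value function of a finite MDP and let T*' be the weighted Bellman optimality operator associated to a fixed behavior policy π, satisfying the pseudo-contraction ‖T*' q − q*‖_∞ ≤ γ'·‖q − q*‖_∞ for some γ' ∈ [0,1) and all q. Let p ≥ 2 be large enough that η := 1 − γ'·(|S|·|A|)^{1/p} > 0, and set f(q) := T*' q. Then for all q ∈ ℝ^{S×A}: ⟨∇(½‖q − q*‖ₚ²), f(q) − q⟩ ≤ −η·‖q − q*‖ₚ², i.e., f satisfies the Lyapunov drift condition with the Lyapunov function φ(x) = ½‖x‖ₚ². -/

import Mathlib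

/-!
Write `x = q - q*`, `w = f q - q*`, and let `N` be the `ℓₚ` norm. The pairing of the gradient of
`φ = ½N²` at `x` with `f q - q = w - x` is the derivative at `t = 0⁺` of
`t ↦ φ ((1 - t) x + t w)`. By Minkowski this function is at most `½((1 - t) N x + t N w)²`, with
equality at `t = 0`, so the derivative is at most `N x (N w - N x)`
(`inner_gradient_half_lpNorm_sq_le`). Comparing `N` with the sup norm,
`N w ≤ |S × A|^{1/p} ‖w‖_∞ ≤ |S × A|^{1/p} γ' ‖x‖_∞ ≤ |S × A|^{1/p} γ' N x`, which gives the claim.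

`gradient` is `0` at points of non-differentiability, so differentiability of `φ` away from the
origin is needed (`differentiableAt_half_lpNorm_sq`). At the origin, a global minimum of `φ`,
the gradient vanishes in either case.
-/


open Finset
open scoped RealInnerProductSpace

variable {S A : Type*} [Fintype S] [Fintype A] [Nonempty S] [Nonempty A]

/-- The Bellman optimality operator of a finite MDP. -/
noncomputable def bellmanOpt (r : S × A → ℝ) (P : S × A → S → ℝ) (γ : ℝ)
    (q : S × A → ℝ) : S × A → ℝ :=
  fun y => r y + γ * ∑ s', P y s' * ⨆ a', q (s', a')

/-- The weighted Bellman optimality operator with state-action weights `d`. -/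
noncomputable def weightedBellmanOpt (r : S × A → ℝ) (P : S × A → S → ℝ) (γ : ℝ)
    (d : S × A → ℝ) (q : S × A → ℝ) : S × A → ℝ :=
  fun y => d y * (bellmanOpt r P γ q y - q y) + q y

/-- The ℓₚ norm of a vector, for a real exponent `p`. -/
noncomputable def lpNorm {ι : Type*} [Fintype ι] (p : ℝ) (x : EuclideanSpace ℝ ι) : ℝ :=
  (∑ i, |x i| ^ p) ^ (1 / p)

section LpNorm

variable {ι : Type*} [Fintype ι]

lemma lpNorm_nonneg (p : ℝ) (x : EuclideanSpace ℝ ι) : 0 ≤ lpNorm p x := by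
  unfold lpNorm
  positivity

lemma lpNorm_add_le {p : ℝ} (hp : 1 ≤ p) (x y : EuclideanSpace ℝ ι) :
    lpNorm p (x + y) ≤ lpNorm p x + lpNorm p y :=
  Real.Lp_add_le Finset.univ (fun i => x i) (fun i => y i) hp

lemma lpNorm_smul {p : ℝ} (hp : 1 ≤ p) {c : ℝ} (hc : 0 ≤ c) (x : EuclideanSpace ℝ ι) :
    lpNorm p (c • x) = c * lpNorm p x := by
  have hp0 : p ≠ 0 := by linarith
  have hs : ∑ i, |(c • x) i| ^ p = c ^ p * ∑ i, |x i| ^ p := by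
    rw [Finset.mul_sum]
    refine Finset.sum_congr rfl fun i _ => ?_
    rw [PiLp.smul_apply, smul_eq_mul, abs_mul, abs_of_nonneg hc,
      Real.mul_rpow hc (abs_nonneg _)]
  unfold lpNorm
  rw [hs, Real.mul_rpow (by positivity) (by positivity), one_div, Real.rpow_rpow_inv hc hp0]

lemma lpNorm_zero {p : ℝ} (hp : 1 ≤ p) : lpNorm p (0 : EuclideanSpace ℝ ι) = 0 := by
  simpa using lpNorm_smul hp le_rfl (0 : EuclideanSpace ℝ ι)

lemma abs_le_lpNorm {p : ℝ} (hp : 1 ≤ p) (x : EuclideanSpace ℝ ι) (i : ι) :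
    |x i| ≤ lpNorm p x := by
  have hp0 : 0 < p := by linarith
  unfold lpNorm
  rw [one_div, Real.le_rpow_inv_iff_of_pos (abs_nonneg _) (by positivity) hp0]
  exact Finset.single_le_sum (f := fun i => |x i| ^ p) (fun j _ => by positivity)
    (Finset.mem_univ i)

lemma lpNorm_le_card_mul {p : ℝ} (hp : 1 ≤ p) (x : EuclideanSpace ℝ ι) {M : ℝ} (hM : 0 ≤ M)
    (h : ∀ i, |x i| ≤ M) : lpNorm p x ≤ (Fintype.card ι : ℝ) ^ (1 / p) * M := by
  have hp0 : 0 < p := by linarith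
  have hs : ∑ i, |x i| ^ p ≤ (Fintype.card ι : ℝ) * M ^ p := by
    calc ∑ i, |x i| ^ p ≤ ∑ _i : ι, M ^ p :=
          Finset.sum_le_sum fun i _ => Real.rpow_le_rpow (abs_nonneg _) (h i) hp0.le
      _ = _ := by simp
  calc lpNorm p x ≤ ((Fintype.card ι : ℝ) * M ^ p) ^ (1 / p) :=
        Real.rpow_le_rpow (by positivity) hs (by positivity)
    _ = _ := by
      rw [Real.mul_rpow (by positivity) (by positivity), one_div,
        Real.rpow_rpow_inv hM hp0.ne']

lemma differentiableAt_half_lpNorm_sq {p : ℝ} (hp : 1 < p) {x : EuclideanSpace ℝ ι}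
    (hx : x ≠ 0) :
    DifferentiableAt ℝ (fun z : EuclideanSpace ℝ ι => (1 / 2) * lpNorm p z ^ 2) x := by
  have hpos : 0 < ∑ i, |x i| ^ p := by
    obtain ⟨i, hi⟩ : ∃ i, x i ≠ 0 := by
      by_contra! h
      exact hx (by ext i; simpa using h i)
    exact Finset.sum_pos' (fun j _ => by positivity) ⟨i, Finset.mem_univ i, by positivity⟩
  have hsum : DifferentiableAt ℝ (fun z : EuclideanSpace ℝ ι => ∑ i, |z i| ^ p) x := by
    refine DifferentiableAt.fun_sum fun i _ => ?_
    have h1 : DifferentiableAt ℝ (fun z : EuclideanSpace ℝ ι => z i) x := by fun_prop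
    exact (hasDerivAt_abs_rpow (x i) hp).differentiableAt.comp x h1
  unfold lpNorm
  exact ((hsum.rpow_const (Or.inl hpos.ne')).pow 2).const_mul _

/-- Drift bound for `½N²` along the segment from `x` to `w`, with `N` the `ℓₚ` norm. -/
lemma inner_gradient_half_lpNorm_sq_le {p : ℝ} (hp : 1 < p) (x w : EuclideanSpace ℝ ι) :
    ⟪gradient (fun z : EuclideanSpace ℝ ι => (1 / 2) * lpNorm p z ^ 2) x, w - x⟫ ≤
      lpNorm p x * (lpNorm p w - lpNorm p x) := by
  rcases eq_or_ne x 0 with rfl | hx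
  · -- The origin minimises the function, so `fderiv`, hence `gradient`, is `0` there.
    have hmin : IsLocalMin (fun z : EuclideanSpace ℝ ι => (1 / 2) * lpNorm p z ^ 2) 0 :=
      Filter.Eventually.of_forall fun z => by
        have := sq_nonneg (lpNorm p z)
        simp only [lpNorm_zero hp.le]
        linarith
    rw [gradient, hmin.fderiv_eq_zero]
    simp [lpNorm_zero hp.le]
  · set φ : EuclideanSpace ℝ ι → ℝ := fun z => (1 / 2) * lpNorm p z ^ 2 with hφ
    have hd : HasFDerivAt φ (fderiv ℝ φ x) x :=
      (differentiableAt_half_lpNorm_sq hp hx).hasFDerivAt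
    have hin : ⟪gradient φ x, w - x⟫ = fderiv ℝ φ x (w - x) := by
      simp [gradient]
    rw [hin]
    have hg : HasDerivAt (fun t : ℝ => φ (x + t • (w - x))) (fderiv ℝ φ x (w - x)) 0 :=
      hd.hasLineDerivAt (w - x)
    have hh : HasDerivAt
        (fun t : ℝ => (1 / 2) * ((1 - t) * lpNorm p x + t * lpNorm p w) ^ 2)
        (lpNorm p x * (lpNorm p w - lpNorm p x)) 0 := by
      have h1 : HasDerivAt (fun t : ℝ => (1 - t) * lpNorm p x + t * lpNorm p w)
          (-1 * lpNorm p x + 1 * lpNorm p w) 0 :=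
        (((hasDerivAt_id (0 : ℝ)).const_sub 1).mul_const _).add
          ((hasDerivAt_id (0 : ℝ)).mul_const _)
      refine ((h1.pow 2).const_mul (1 / 2 : ℝ)).congr_deriv ?_
      simp
      ring
    refine le_of_tendsto_of_tendsto hg.tendsto_slope_zero_right hh.tendsto_slope_zero_right ?_
    filter_upwards [Ioo_mem_nhdsGT (zero_lt_one' ℝ)] with t ht
    have hseg : x + t • (w - x) = (1 - t) • x + t • w := by module
    have hN : lpNorm p (x + t • (w - x)) ≤ (1 - t) * lpNorm p x + t * lpNorm p w := by
      rw [hseg]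
      refine (lpNorm_add_le hp.le _ _).trans_eq ?_
      rw [lpNorm_smul hp.le (by linarith [ht.2]), lpNorm_smul hp.le ht.1.le]
    have hN2 := pow_le_pow_left₀ (lpNorm_nonneg p _) hN 2
    simp only [smul_eq_mul, zero_add, zero_smul, add_zero, hφ, sub_zero, one_mul, zero_mul]
    refine mul_le_mul_of_nonneg_left ?_ (inv_nonneg.2 ht.1.le)
    linarith

end LpNorm

/-- If the weighted Bellman optimality operator `T*'` is a pseudo-contraction towards
`q*` in the sup norm with modulus `γ' ∈ [0,1)`, and `p ≥ 2` is large enough that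
`η := 1 − γ'(|S||A|)^{1/p} > 0`, then `f := T*'` satisfies the Lyapunov drift
condition for `φ(x) = ½‖x‖ₚ²`. -/
theorem weighted_bellman_lyapunov_drift
    (r : S × A → ℝ) (P : S × A → S → ℝ)
    (hPnonneg : ∀ y s', 0 ≤ P y s') (hPsum : ∀ y, ∑ s', P y s' = 1)
    (γ : ℝ) (hγ0 : 0 ≤ γ) (hγ1 : γ < 1)
    (qstar : EuclideanSpace ℝ (S × A)) (hqstar : bellmanOpt r P γ qstar = qstar)
    (d : S × A → ℝ)
    (γ' : ℝ) (hγ'0 : 0 ≤ γ') (hγ'1 : γ' < 1)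
    (hcontraction : ∀ q : S × A → ℝ,
      (⨆ y : S × A, |weightedBellmanOpt r P γ d q y - qstar y|) ≤
        γ' * ⨆ y : S × A, |q y - qstar y|)
    (p : ℝ) (hp : 2 ≤ p)
    (η : ℝ) (hη : η = 1 - γ' * ((Fintype.card S * Fintype.card A : ℝ)) ^ (1 / p))
    (hηpos : 0 < η)
    (f : EuclideanSpace ℝ (S × A) → EuclideanSpace ℝ (S × A))
    (hf : ∀ q, f q = weightedBellmanOpt r P γ d q) :
    ∀ q : EuclideanSpace ℝ (S × A),
      ⟪gradient (fun z : EuclideanSpace ℝ (S × A) => (1 / 2) * lpNorm p z ^ 2)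
          (q - qstar), f q - q⟫ ≤ -η * lpNorm p (q - qstar) ^ 2 := by
  intro q
  have hp1 : 1 < p := by linarith
  set x := q - qstar with hx
  have hfq : f q - q = (f q - qstar) - x := by rw [hx]; abel
  rw [hfq]
  refine (inner_gradient_half_lpNorm_sq_le hp1 x (f q - qstar)).trans ?_
  have hsup : (⨆ y : S × A, |q y - qstar y|) ≤ lpNorm p x :=
    ciSup_le fun y => abs_le_lpNorm hp1.le x y
  have hcoord : ∀ y, |(f q - qstar) y| ≤ γ' * lpNorm p x := fun y => by
    have h1 : |(f q - qstar) y| = |weightedBellmanOpt r P γ d q y - qstar y| := by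
      rw [PiLp.sub_apply, hf q]
    rw [h1]
    exact ((le_ciSup (f := fun y => |weightedBellmanOpt r P γ d q y - qstar y|)
      (Set.finite_range _).bddAbove y).trans (hcontraction q)).trans
      (mul_le_mul_of_nonneg_left hsup hγ'0)
  have hw := lpNorm_le_card_mul hp1.le (f q - qstar)
    (mul_nonneg hγ'0 (lpNorm_nonneg p x)) hcoord
  rw [Fintype.card_prod, Nat.cast_mul] at hw
  rw [hη]
  have := mul_le_mul_of_nonneg_left hw (lpNorm_nonneg p x)
  linarith
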